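/- arXiv:2603.20105 — 2 statements merged into one kernel-verified Lean document; each statement's English description precedes it below -/
import Mathlib

section
/- Let k ≥ 2 and τ ≥ 1 be natural numbers and let m be a natural number with m > τ. Then ⌈log_k(⌈m/k⌉ / τ)⌉ ≤ ⌈log_k(m/τ)⌉ − 1, where ⌈m/k⌉ is the ceiling division of m by k and log_k is the real logarithm base k. In other words, the rank r(m) = ⌈log_k(m/τ)⌉ strictly decreases when an input of size m > τ is split into chunks of size ⌈m/k⌉. -/
/-!
The rank `⌈log_k (m/τ)⌉` is the least integer `n` with `m ≤ τ * k ^ n`. Since `m > τ`, it is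
positive, say `n = j + 1` with `j` a natural number. Then `m ≤ (τ * k ^ j) * k`, and because
`τ * k ^ j` is an integer, the ceiling of `m / k` is still at most `τ * k ^ j`. Integrality of
`τ * k ^ j`, which relies on `j ≥ 0`, is what absorbs the rounding.
-/

/-- Rank-decrease claim (inductive step of Theorem 1): for `k ≥ 2`, `τ ≥ 1`
and `m > τ`, the rank `r(m) = ⌈log_k (m/τ)⌉` strictly decreases when an input
of size `m` is split into chunks of size `⌈m/k⌉` (ceiling division). -/
theorem lambda_rlm_rank_decreases (k τ m : ℕ) (hk : 2 ≤ k) (hτ : 1 ≤ τ)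
    (hm : τ < m) :
    ⌈Real.logb k ((((m + k - 1) / k : ℕ) : ℝ) / τ)⌉
      ≤ ⌈Real.logb k ((m : ℝ) / τ)⌉ - 1 := by
  have hk1 : (1 : ℝ) < k := by exact_mod_cast hk
  have hτ0 : (0 : ℝ) < τ := by exact_mod_cast hτ
  have hm1 : 1 < (m : ℝ) / τ := by
    rw [one_lt_div hτ0]
    exact_mod_cast hm
  have hpos : 0 < ⌈Real.logb k ((m : ℝ) / τ)⌉ := Int.ceil_pos.2 (Real.logb_pos hk1 hm1)
  obtain ⟨j, hj⟩ : ∃ j : ℕ, ⌈Real.logb k ((m : ℝ) / τ)⌉ = (j : ℤ) + 1 :=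
    ⟨(⌈Real.logb k ((m : ℝ) / τ)⌉ - 1).toNat, by omega⟩
  have hle : Real.logb k ((m : ℝ) / τ) ≤ ((j + 1 : ℕ) : ℝ) := by
    have h := Int.le_ceil (Real.logb k ((m : ℝ) / τ))
    rw [hj] at h
    exact_mod_cast h
  rw [Real.logb_le_iff_le_rpow hk1 (by linarith), Real.rpow_natCast, div_le_iff₀ hτ0] at hle
  have hmN : m ≤ k ^ (j + 1) * τ := by exact_mod_cast hle
  have hc : (m + k - 1) / k ≤ k ^ j * τ := by
    rw [← Nat.lt_succ_iff, Nat.div_lt_iff_lt_mul (by omega)]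
    have h : (k ^ j * τ).succ * k = k ^ (j + 1) * τ + k := by
      rw [Nat.succ_eq_add_one]
      ring
    omega
  have hcpos : 0 < (m + k - 1) / k := Nat.div_pos (by omega) (by omega)
  rw [hj, add_sub_cancel_right, Int.ceil_le, Int.cast_natCast,
    Real.logb_le_iff_le_rpow hk1 (div_pos (by exact_mod_cast hcpos) hτ0), Real.rpow_natCast,
    div_le_iff₀ hτ0]
  exact_mod_cast hc
end

section
/- Let α, β, γ be real numbers with α > 0, β > 0 and γ ≥ 0, and define f : ℝ → ℝ by f(k) = (k²·(α + β) − k·(α + γ))/(k − 1). Then f is strictly monotone increasing on the interval [2, ∞). Consequently, among all integers k ≥ 2, the value f(k) is minimized uniquely at k = 2: for every integer k ≥ 2 one has f(2) ≤ f(k), with equality only when k = 2. -/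
/-!
Substituting `t = k - 1` gives `f(k) = (α + β) t + (β - γ) / t + const`, so for `s = a - 1` and
`t = b - 1` the difference factors as `f(b) - f(a) = (b - a) (s t (α + β) - (β - γ)) / (s t)`.
On `[2, ∞)` we have `s t ≥ 1`, and the middle factor is at least `α + γ > 0`.
Minimality at `k = 2` is then monotonicity restricted to the integers.
-/

/-- The cost-bound function from Theorem 4 (Optimal Partition):
`f(k) = (k²·(α + β) − k·(α + γ))/(k − 1)`. -/
noncomputable def costBound (α β γ : ℝ) (k : ℝ) : ℝ :=
  (k ^ 2 * (α + β) - k * (α + γ)) / (k - 1)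

/-- Factored form of the increments of the cost bound, valid away from the pole at `1`. -/
theorem costBound_sub (α β γ a b : ℝ) (ha : a - 1 ≠ 0) (hb : b - 1 ≠ 0) :
    costBound α β γ b - costBound α β γ a =
      (b - a) * ((a - 1) * (b - 1) * (α + β) - (β - γ)) / ((a - 1) * (b - 1)) := by
  unfold costBound
  field_simp
  ring

/-- Theorem 4 (Optimal Partition): for `α > 0`, `β > 0`, `γ ≥ 0`, the cost
bound `f` is strictly monotone increasing on `[2, ∞)`; consequently, among all
integers `k ≥ 2`, `f(k)` is uniquely minimized at `k = 2`: `f(2) ≤ f(k)` with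
equality only when `k = 2`. -/
theorem costBound_strictMono_and_min_at_two (α β γ : ℝ)
    (hα : 0 < α) (hβ : 0 < β) (hγ : 0 ≤ γ) :
    StrictMonoOn (costBound α β γ) (Set.Ici (2 : ℝ)) ∧
      ∀ k : ℤ, 2 ≤ k →
        costBound α β γ 2 ≤ costBound α β γ (k : ℝ) ∧
          (costBound α β γ 2 = costBound α β γ (k : ℝ) → k = 2) := by
  have mono : StrictMonoOn (costBound α β γ) (Set.Ici (2 : ℝ)) := by
    intro a ha b hb hab
    rw [Set.mem_Ici] at ha hb
    have hs : 1 ≤ a - 1 := by linarith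
    have ht : 1 ≤ b - 1 := by linarith
    have hst : 1 ≤ (a - 1) * (b - 1) := one_le_mul_of_one_le_of_one_le hs ht
    rw [← sub_pos, costBound_sub α β γ a b (by linarith) (by linarith)]
    have hfac : 0 < (a - 1) * (b - 1) * (α + β) - (β - γ) := by
      have := le_mul_of_one_le_left (by linarith : 0 ≤ α + β) hst
      linarith
    exact div_pos (mul_pos (sub_pos.2 hab) hfac) (by linarith)
  refine ⟨mono, fun k hk => ?_⟩
  have h2 : (2 : ℝ) ∈ Set.Ici (2 : ℝ) := Set.mem_Ici.2 le_rfl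
  have hk' : (k : ℝ) ∈ Set.Ici (2 : ℝ) := Set.mem_Ici.2 (by exact_mod_cast hk)
  refine ⟨(mono.le_iff_le h2 hk').2 hk', fun h => ?_⟩
  have := mono.injOn h2 hk' h
  exact_mod_cast this.symm
end
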